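/- Consider the hexagonal (honeycomb) lattice graph: the simple graph with vertex set (ℤ × ℤ) × {0,1} in which a vertex ((x,y),0) is adjacent precisely to the three vertices ((x,y),1), ((x+1,y),1) and ((x,y+1),1) (every vertex has degree 3). There exists an edge labelling l with values in {1,2,3}, invariant under translation by every vector of some finite-index subgroup of ℤ² (acting on the first coordinate), such that every vertex has weighted degree in {3, 4, 5, 6, 7} and adjacent vertices have distinct weighted degrees; in particular, the hexagonal lattice graph has a fully periodic vertex-colouring 3-edge labelling. -/

import Mathlib

/-!
The graph is bipartite, so it suffices that all vertices `(p, 1)` have weighted degree `5` while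
no vertex `(p, 0)` does. Label an edge between `(p, 0)` and `(q, 1)` by `1` if `p.1` is odd and
`q.2 = p.2` (that is, `q = p` or `q = p + (1, 0)`), and by `2` otherwise. A vertex `(p, 0)` has
weighted degree `2 + 2 + 2 = 6` if `p.1` is even and `1 + 1 + 2 = 4` if `p.1` is odd. The
neighbours `(q, 0)` and `(q - (1, 0), 0)` of `(q, 1)` have first coordinates of opposite parity and
the edge to `(q - (0, 1), 0)` has label `2`, so the weighted degree of `(q, 1)` is `1 + 2 + 2 = 5`. Only the parity of the first coordinate matters, so the
labelling is invariant under the index-two subgroup of vectors with even first coordinate.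
-/

open scoped BigOperators

/-- The hexagonal (honeycomb) lattice graph: a vertex `((x,y), 0)` is adjacent precisely to
`((x,y), 1)`, `((x+1,y), 1)` and `((x,y+1), 1)`. -/
def HexAdj (a b : (ℤ × ℤ) × Fin 2) : Prop :=
  (a.2 = 0 ∧ b.2 = 1 ∧ (b.1 = a.1 ∨ b.1 = a.1 + (1, 0) ∨ b.1 = a.1 + (0, 1))) ∨
  (a.2 = 1 ∧ b.2 = 0 ∧ (a.1 = b.1 ∨ a.1 = b.1 + (1, 0) ∨ a.1 = b.1 + (0, 1)))

/-- The weighted degree of a vertex of the hexagonal lattice graph. -/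
noncomputable def wdeg (w : (ℤ × ℤ) × Fin 2 → (ℤ × ℤ) × Fin 2 → ℕ)
    (u : (ℤ × ℤ) × Fin 2) : ℕ :=
  ∑ᶠ v ∈ {v | HexAdj u v}, w u v

/-- The label of the edge between `(p, 0)` and `(q, 1)`. -/
def hexLabelAux (p q : ℤ × ℤ) : ℕ := if p.1 % 2 = 1 ∧ q.2 = p.2 then 1 else 2

/-- The symmetric edge labelling; on non-adjacent pairs its value is irrelevant. -/
def hexLabel (u v : (ℤ × ℤ) × Fin 2) : ℕ :=
  if u.2 = 0 then hexLabelAux u.1 v.1 else hexLabelAux v.1 u.1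

lemma hexAdj_zero_set (x y : ℤ) :
    {v | HexAdj ((x, y), 0) v} =
      (({((x, y), 1), ((x + 1, y), 1), ((x, y + 1), 1)} : Finset ((ℤ × ℤ) × Fin 2)) :
        Set ((ℤ × ℤ) × Fin 2)) := by
  ext ⟨⟨a, b⟩, i⟩
  fin_cases i <;> simp [HexAdj]

lemma hexAdj_one_set (x y : ℤ) :
    {v | HexAdj ((x, y), 1) v} =
      (({((x, y), 0), ((x - 1, y), 0), ((x, y - 1), 0)} : Finset ((ℤ × ℤ) × Fin 2)) :
        Set ((ℤ × ℤ) × Fin 2)) := by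
  ext ⟨⟨a, b⟩, i⟩
  fin_cases i
  · simp [HexAdj]
    omega
  · simp [HexAdj]

lemma wdeg_hexLabel_zero (x y : ℤ) :
    wdeg hexLabel ((x, y), 0) = if x % 2 = 1 then 4 else 6 := by
  rw [wdeg, hexAdj_zero_set, finsum_mem_coe_finset, Finset.sum_insert (by simp),
    Finset.sum_insert (by simp), Finset.sum_singleton]
  by_cases h : x % 2 = 1 <;> simp [hexLabel, hexLabelAux, h]

lemma wdeg_hexLabel_one (x y : ℤ) : wdeg hexLabel ((x, y), 1) = 5 := by
  rw [wdeg, hexAdj_one_set, finsum_mem_coe_finset, Finset.sum_insert (by simp; omega),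
    Finset.sum_insert (by simp), Finset.sum_singleton]
  rcases Int.emod_two_eq_zero_or_one x with h | h
  · have h' : (x - 1) % 2 = 1 := by omega
    simp [hexLabel, hexLabelAux, h, h']
  · have h' : (x - 1) % 2 = 0 := by omega
    have h'' : y ≠ y - 1 := by omega
    simp [hexLabel, hexLabelAux, h, h', h'']

/-- The hexagonal lattice graph admits a vertex-colouring `{1,2,3}`-edge labelling, invariant
under translation by every vector of some finite-index subgroup of `ℤ²`, whose weighted degrees
all lie in `{3, 4, 5, 6, 7}`. -/
theorem hexagonal_lattice_123 :
    ∃ (l : (ℤ × ℤ) × Fin 2 → (ℤ × ℤ) × Fin 2 → ℕ) (H : AddSubgroup (ℤ × ℤ)),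
      H.FiniteIndex ∧
      (∀ u v, HexAdj u v → l u v ∈ ({1, 2, 3} : Set ℕ)) ∧
      (∀ u v, HexAdj u v → l u v = l v u) ∧
      (∀ t ∈ H, ∀ u v, HexAdj u v →
        l (u.1 + t, u.2) (v.1 + t, v.2) = l u v) ∧
      (∀ u : (ℤ × ℤ) × Fin 2, wdeg l u ∈ ({3, 4, 5, 6, 7} : Set ℕ)) ∧
      (∀ u v, HexAdj u v → wdeg l u ≠ wdeg l v) := by
  refine ⟨hexLabel, ((Int.castAddHom (ZMod 2)).comp (AddMonoidHom.fst ℤ ℤ)).ker,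
    inferInstance, ?_, ?_, ?_, ?_, ?_⟩
  · intro u v _
    unfold hexLabel hexLabelAux
    split_ifs <;> simp
  · rintro ⟨p, i⟩ ⟨q, j⟩ (⟨hi, hj, _⟩ | ⟨hi, hj, _⟩) <;>
      · dsimp only at hi hj
        subst hi hj
        simp [hexLabel]
  · rintro ⟨s, t⟩ ht ⟨⟨x, y⟩, i⟩ ⟨⟨x', y'⟩, j⟩ _
    have hs : s % 2 = 0 := by
      have h : ((s : ℤ) : ZMod 2) = 0 := by simpa [AddMonoidHom.mem_ker] using ht
      exact Int.emod_eq_zero_of_dvd ((ZMod.intCast_zmod_eq_zero_iff_dvd s 2).1 h)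
    have h1 : (x + s) % 2 = x % 2 := by omega
    have h2 : (x' + s) % 2 = x' % 2 := by omega
    simp [hexLabel, hexLabelAux, h1, h2]
  · rintro ⟨⟨x, y⟩, i⟩
    fin_cases i
    · change wdeg hexLabel ((x, y), 0) ∈ _
      rw [wdeg_hexLabel_zero]
      split_ifs <;> simp
    · change wdeg hexLabel ((x, y), 1) ∈ _
      simp [wdeg_hexLabel_one]
  · rintro ⟨⟨x, y⟩, i⟩ ⟨⟨x', y'⟩, j⟩ (⟨hi, hj, _⟩ | ⟨hi, hj, _⟩) <;>
      · dsimp only at hi hj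
        subst hi hj
        rw [wdeg_hexLabel_zero, wdeg_hexLabel_one]
        split_ifs <;> simp
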